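/- Let G = (𝒩, w) be a closed integer octagonal graph. Define w_t by w_t(i,ī) = 2⌊w(i,ī)/2⌋ for all i ∈ 𝒩 and w_t(i,j) = w(i,j) whenever j ≠ ī, and define w_T by w_T(i,j) = min{ w(i,j), ⌊w(i,ī)/2⌋ + ⌊w(j̄,j)/2⌋ }. If G_t = (𝒩, w_t) is consistent, then the strong closure w_t^S of G_t (the pointwise supremum of all strongly closed octagonal graphs ⊴ w_t) satisfies w_t^S(i,j) ≤ w_T(i,j) for all i, j ∈ 𝒩. -/

import Mathlib

/-- Extended rationals: ℚ ∪ {+∞}. -/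
abbrev Qinf := WithTop ℚ

/-- Weight of a path (list of nodes): sum of the weights of its arcs. -/
def pathWeight {N : Type*} (w : N → N → Qinf) : List N → Qinf
  | [] => 0
  | [_] => 0
  | a :: b :: l => w a b + pathWeight w (b :: l)

/-- A proper cycle: at least two arcs, first node equals last node,
    consecutive nodes distinct. -/
def IsProperCycle {N : Type*} (l : List N) : Prop :=
  3 ≤ l.length ∧ l.head? = l.getLast? ∧ l.Chain' (· ≠ ·)

/-- A graph is consistent if it has no proper cycle of negative weight. -/
def Consistent {N : Type*} (w : N → N → Qinf) : Prop :=
  ∀ l : List N, IsProperCycle l → 0 ≤ pathWeight w l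

/-- A consistent graph is closed if self-loops have weight 0 and the
    triangle inequality holds. -/
def ClosedG {N : Type*} (w : N → N → Qinf) : Prop :=
  Consistent w ∧ (∀ i, w i i = 0) ∧ ∀ i j k, w i j ≤ w i k + w k j

/-- The "bar" involution on nodes: ī = i+1 for even i, ī = i-1 for odd i. -/
def bar {n : ℕ} (i : Fin (2 * n)) : Fin (2 * n) :=
  if _h : i.val % 2 = 0 then ⟨i.val + 1, by have := i.isLt; omega⟩
  else ⟨i.val - 1, by have := i.isLt; omega⟩

/-- Coherence: w(i,j) = w(j̄,ī). -/
def Coherent {n : ℕ} (w : Fin (2 * n) → Fin (2 * n) → Qinf) : Prop :=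
  ∀ i j, w i j = w (bar j) (bar i)

/-- An octagonal graph: consistent and coherent. -/
def Octagonal {n : ℕ} (w : Fin (2 * n) → Fin (2 * n) → Qinf) : Prop :=
  Consistent w ∧ Coherent w

/-- Pointwise order on graphs. -/
def GLe {n : ℕ} (w₁ w₂ : Fin (2 * n) → Fin (2 * n) → Qinf) : Prop :=
  ∀ i j, w₁ i j ≤ w₂ i j

/-- Halving on ℚ∞ (with +∞/2 = +∞). -/
def half (x : Qinf) : Qinf := x.map (fun q => q / 2)

/-- Floored halving on ℚ∞ (with ⌊+∞/2⌋ = +∞). -/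
def fhalf (x : Qinf) : Qinf := x.map (fun q => ((⌊q / 2⌋ : ℤ) : ℚ))

/-- Integer weights: every weight is an integer or +∞. -/
def IntWeights {n : ℕ} (w : Fin (2 * n) → Fin (2 * n) → Qinf) : Prop :=
  ∀ i j, w i j = ⊤ ∨ ∃ d : ℤ, w i j = ((d : ℚ) : Qinf)

/-- A strongly closed octagonal graph. -/
def StronglyClosed {n : ℕ} (w : Fin (2 * n) → Fin (2 * n) → Qinf) : Prop :=
  Octagonal w ∧ ClosedG w ∧ ∀ i j, 2 * w i j ≤ w i (bar i) + w (bar j) j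

/-- A tightly closed integer octagonal graph. -/
def TightlyClosed {n : ℕ} (w : Fin (2 * n) → Fin (2 * n) → Qinf) : Prop :=
  IntWeights w ∧ StronglyClosed w ∧
    ∀ i, w i (bar i) = ⊤ ∨ ∃ d : ℤ, w i (bar i) = (((2 * d : ℤ) : ℚ) : Qinf)


theorem bar_bar_aux {n : ℕ} (i : Fin (2 * n)) : bar (bar i) = i := by
  have key : ∀ k : Fin (2 * n),
      (bar k).val = if k.val % 2 = 0 then k.val + 1 else k.val - 1 := by
    intro k
    unfold bar
    split_ifs <;> rfl
  apply Fin.ext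
  rw [key, key]
  split_ifs <;> omega

theorem two_mul_top_aux : (2 : Qinf) * ⊤ = ⊤ := WithTop.mul_top (by norm_num)

theorem two_coe_aux (q : ℚ) : (2 : Qinf) * (q : Qinf) = ((2 * q : ℚ) : Qinf) := rfl

theorem two_fhalf_le_aux (x : Qinf) : 2 * fhalf x ≤ x := by
  induction x using WithTop.recTopCoe with
  | top => exact le_top
  | coe q =>
    change (2 : Qinf) * (((⌊q / 2⌋ : ℤ) : ℚ) : Qinf) ≤ _
    rw [two_coe_aux, WithTop.coe_le_coe]
    have := Int.floor_le (q / 2)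
    linarith

theorem half_le_aux (x a b : Qinf) (h : 2 * x ≤ 2 * a + 2 * b) : x ≤ a + b := by
  induction a using WithTop.recTopCoe with
  | top => simp
  | coe a =>
    induction b using WithTop.recTopCoe with
    | top => simp
    | coe b =>
      induction x using WithTop.recTopCoe with
      | top =>
        rw [two_mul_top_aux, two_coe_aux, two_coe_aux, ← WithTop.coe_add] at h
        exact absurd (top_le_iff.mp h) (WithTop.coe_ne_top)
      | coe x =>
        rw [two_coe_aux, two_coe_aux, two_coe_aux, ← WithTop.coe_add, WithTop.coe_le_coe] at h
        rw [← WithTop.coe_add, WithTop.coe_le_coe]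
        linarith

/-- The strong closure of the tightened graph is bounded above by
    the candidate tight closure. -/
theorem strong_closure_of_tightening_le_tight_candidate
    {n : ℕ} (hn : 1 ≤ n) (w : Fin (2 * n) → Fin (2 * n) → Qinf)
    (hoct : Octagonal w) (hint : IntWeights w) (hcl : ClosedG w)
    (wt wT : Fin (2 * n) → Fin (2 * n) → Qinf)
    (hwt : ∀ i j, wt i j = if j = bar i then 2 * fhalf (w i j) else w i j)
    (hwT : ∀ i j, wT i j = min (w i j) (fhalf (w i (bar i)) + fhalf (w (bar j) j)))
    (hcons : Consistent wt)
    (wtS : Fin (2 * n) → Fin (2 * n) → Qinf)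
    (hS : ∀ i j, IsLUB
      {q : Qinf | ∃ w' : Fin (2 * n) → Fin (2 * n) → Qinf,
        StronglyClosed w' ∧ GLe w' wt ∧ q = w' i j} (wtS i j)) :
    ∀ i j, wtS i j ≤ wT i j := by
  intro i j
  apply (hS i j).2
  rintro q ⟨w', hw', hle, rfl⟩
  rw [hwT]
  apply le_min
  · refine (hle i j).trans ?_
    rw [hwt]
    split_ifs
    · exact two_fhalf_le_aux _
    · exact le_rfl
  · apply half_le_aux
    refine (hw'.2.2 i j).trans ?_
    refine (add_le_add (hle _ _) (hle _ _)).trans ?_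
    rw [hwt, hwt, if_pos rfl, if_pos (bar_bar_aux j).symm]
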